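/- Let M1, M2, N1, N2 be positive integers. For a positive natural number κ, let D_in(κ) denote the convex hull (in ℝ⁴) of the set of points of D_out(κM1, κM2, κN1, κN2) all four of whose coordinates are integers. Then the set { d ∈ ℝ⁴ : there exists a positive natural number κ such that κ·d ∈ D_in(κ) } equals D_out(M1, M2, N1, N2). -/

import Mathlib

/-- The outer-bound region on the degrees of freedom of the MIMO X channel, as a
set of quadruples of (nonnegative) reals, here encoded as vectors in `Fin 4 → ℝ`
with coordinates `(d11, d12, d21, d22) = (d 0, d 1, d 2, d 3)`. -/
def Dout (M1 M2 N1 N2 : ℝ) : Set (Fin 4 → ℝ) :=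
  {d | 0 ≤ d 0 ∧ 0 ≤ d 1 ∧ 0 ≤ d 2 ∧ 0 ≤ d 3 ∧
    d 0 + d 1 + d 2 ≤ max N1 M1 ∧
    d 0 + d 1 + d 3 ≤ max N1 M2 ∧
    d 0 + d 2 + d 3 ≤ max N2 M1 ∧
    d 1 + d 2 + d 3 ≤ max N2 M2 ∧
    d 0 + d 1 ≤ N1 ∧
    d 2 + d 3 ≤ N2 ∧
    d 0 + d 2 ≤ M1 ∧
    d 1 + d 3 ≤ M2}


/-- A rational polyhedron scaled by `κ`. -/
def PolyQ {ι : Type} (A : ι → Fin 4 → ℤ) (c : ι → ℤ) (κ : ℝ) : Set (Fin 4 → ℝ) :=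
  {x | ∀ i, (fun j => (A i j : ℝ)) ⬝ᵥ x ≤ κ * c i}

theorem polyQ_convex {ι : Type} (A : ι → Fin 4 → ℤ) (c : ι → ℤ) (κ : ℝ) :
    Convex ℝ (PolyQ A c κ) := by
  intro x hx y hy a b ha hb hab i
  have h1 := mul_le_mul_of_nonneg_left (hx i) ha
  have h2 := mul_le_mul_of_nonneg_left (hy i) hb
  rw [dotProduct_add, dotProduct_smul, dotProduct_smul, smul_eq_mul, smul_eq_mul]
  have : κ * (c i : ℝ) = a * (κ * c i) + b * (κ * c i) := by rw [← add_mul, hab, one_mul]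
  linarith

theorem exists_retract : ∃ f : ℝ →ₗ[ℚ] ℚ, f 1 = 1 := by
  obtain ⟨f, hf⟩ := LinearMap.exists_leftInverse_of_injective
    (LinearMap.toSpanSingleton ℚ ℝ 1) (by
      rw [LinearMap.ker_eq_bot]
      intro a b h
      simpa [LinearMap.toSpanSingleton_apply, Rat.smul_def] using h)
  refine ⟨f, ?_⟩
  have := LinearMap.congr_fun hf 1
  simpa [LinearMap.toSpanSingleton_apply] using this

open Classical in
theorem ray_step {ι : Type} [Fintype ι] (A : ι → Fin 4 → ℤ) (c : ι → ℤ)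
    (hb : ∀ v : Fin 4 → ℝ, v ≠ 0 → ∃ i, 0 < (fun j => (A i j : ℝ)) ⬝ᵥ v)
    (d v : Fin 4 → ℝ) (hd : d ∈ PolyQ A c 1) (hv : v ≠ 0)
    (ht : ∀ i, (fun j => (A i j : ℝ)) ⬝ᵥ d = c i → (fun j => (A i j : ℝ)) ⬝ᵥ v = 0) :
    ∃ t : ℝ, 0 < t ∧ d + t • v ∈ PolyQ A c 1 ∧
      (Finset.univ.filter fun i => (fun j => (A i j : ℝ)) ⬝ᵥ (d + t • v) ≠ c i).card <
      (Finset.univ.filter fun i => (fun j => (A i j : ℝ)) ⬝ᵥ d ≠ c i).card := by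
  set L : ι → (Fin 4 → ℝ) → ℝ := fun i x => (fun j => (A i j : ℝ)) ⬝ᵥ x with hL
  have hadd : ∀ i t, L i (d + t • v) = L i d + t * L i v := by
    intro i t
    simp only [hL, dotProduct_add, dotProduct_smul, smul_eq_mul]
  have hd' : ∀ i, L i d ≤ c i := fun i => by simpa using hd i
  change ∀ i, L i d = c i → L i v = 0 at ht
  obtain ⟨i1, hi1⟩ := hb v hv
  change 0 < L i1 v at hi1
  obtain ⟨i0, hi0, hmin⟩ := Finset.exists_min_image (Finset.univ.filter fun i => 0 < L i v)
    (fun i => (c i - L i d) / L i v) ⟨i1, by simpa using hi1⟩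
  simp only [Finset.mem_filter, Finset.mem_univ, true_and] at hi0 hmin
  have hslack : L i0 d < c i0 := lt_of_le_of_ne (hd' i0) (fun h => hi0.ne' (ht i0 h))
  have htp : 0 < (c i0 - L i0 d) / L i0 v := div_pos (sub_pos.2 hslack) hi0
  refine ⟨(c i0 - L i0 d) / L i0 v, htp, ?_, ?_⟩
  · intro i
    change L i _ ≤ _
    rw [hadd, one_mul]
    by_cases h : 0 < L i v
    · have := (le_div_iff₀ h).1 (hmin i h)
      linarith
    · have := mul_nonpos_of_nonneg_of_nonpos htp.le (not_lt.1 h)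
      linarith [hd' i]
  · apply Finset.card_lt_card
    rw [Finset.ssubset_iff_of_subset]
    · refine ⟨i0, by simpa using hslack.ne, ?_⟩
      simp only [Finset.mem_filter, Finset.mem_univ, true_and, not_not]
      change L i0 _ = _
      rw [hadd, div_mul_cancel₀ _ hi0.ne']
      ring
    · intro i
      simp only [Finset.mem_filter, Finset.mem_univ, true_and]
      intro h h'
      apply h
      change L i _ = _
      rw [hadd, ht i h', mul_zero, add_zero]
      exact h'

open Classical in
theorem polyQ_subset {ι : Type} [Fintype ι] (A : ι → Fin 4 → ℤ) (c : ι → ℤ)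
    (hb : ∀ v : Fin 4 → ℝ, v ≠ 0 → ∃ i, 0 < (fun j => (A i j : ℝ)) ⬝ᵥ v)
    (T : Set (Fin 4 → ℝ)) (hT : Convex ℝ T)
    (hrat : ∀ q : Fin 4 → ℚ, (fun j => (q j : ℝ)) ∈ PolyQ A c 1 → (fun j => (q j : ℝ)) ∈ T) :
    ∀ (n : ℕ) (d : Fin 4 → ℝ), d ∈ PolyQ A c 1 →
      (Finset.univ.filter fun i => (fun j => (A i j : ℝ)) ⬝ᵥ d ≠ c i).card = n → d ∈ T := by
  intro n
  induction n using Nat.strong_induction_on with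
  | _ n ih =>
  intro d hd hn
  obtain ⟨f, hf⟩ := exists_retract
  by_cases hv : (fun j => d j - ((f (d j) : ℚ) : ℝ)) = 0
  · have : d = fun j => ((f (d j) : ℚ) : ℝ) := by
      funext j
      have := congrFun hv j
      simp only [Pi.zero_apply] at this
      linarith
    rw [this]
    apply hrat (fun j => f (d j))
    rw [← this]
    exact hd
  · set v : Fin 4 → ℝ := fun j => d j - ((f (d j) : ℚ) : ℝ) with hvd
    have ht : ∀ i, (fun j => (A i j : ℝ)) ⬝ᵥ d = c i → (fun j => (A i j : ℝ)) ⬝ᵥ v = 0 := by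
      intro i h
      simp only [dotProduct] at h ⊢
      have h2 : f (∑ j, (A i j : ℝ) * d j) = ∑ j, (A i j : ℚ) * f (d j) := by
        rw [map_sum]
        refine Finset.sum_congr rfl fun j _ => ?_
        rw [← zsmul_eq_mul, map_zsmul, zsmul_eq_mul]
      have h3 : f (c i : ℝ) = c i := by
        rw [← mul_one (c i : ℝ), ← zsmul_eq_mul, map_zsmul, zsmul_eq_mul, hf, mul_one]
      rw [h, h3] at h2
      have h4 : (c i : ℝ) = ∑ j, (A i j : ℝ) * ((f (d j) : ℚ) : ℝ) := by exact_mod_cast h2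
      simp only [hvd, mul_sub, Finset.sum_sub_distrib]
      rw [h, ← h4, sub_self]
    obtain ⟨t, ht0, htP, htc⟩ := ray_step A c hb d v hd hv ht
    obtain ⟨s, hs0, hsP, hsc⟩ := ray_step A c hb d (-v) hd (neg_ne_zero.2 hv)
      (fun i h => by rw [dotProduct_neg, ht i h, neg_zero])
    have m1 := ih _ (hn ▸ htc) _ htP rfl
    have m2 := ih _ (hn ▸ hsc) _ hsP rfl
    have hst : 0 < s + t := by linarith
    have := hT m1 m2 (a := s / (s + t)) (b := t / (s + t)) (by positivity) (by positivity)
      (by field_simp)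
    convert this using 1
    funext j
    simp only [Pi.add_apply, Pi.smul_apply, Pi.neg_apply, smul_eq_mul]
    field_simp
    ring

/-- The set of achievable points. -/
def TinQ {ι : Type} (A : ι → Fin 4 → ℤ) (c : ι → ℤ) : Set (Fin 4 → ℝ) :=
  {d | ∃ κ : ℕ, 0 < κ ∧ (κ : ℝ) • d ∈ convexHull ℝ
    {x : Fin 4 → ℝ | x ∈ PolyQ A c κ ∧ ∀ i : Fin 4, ∃ z : ℤ, x i = (z : ℝ)}}

theorem hull_scale {ι : Type} (A : ι → Fin 4 → ℤ) (c : ι → ℤ) (κ l : ℕ) (y : Fin 4 → ℝ)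
    (hy : y ∈ convexHull ℝ
      {x : Fin 4 → ℝ | x ∈ PolyQ A c κ ∧ ∀ i : Fin 4, ∃ z : ℤ, x i = (z : ℝ)}) :
    (l : ℝ) • y ∈ convexHull ℝ
      {x : Fin 4 → ℝ | x ∈ PolyQ A c ((l * κ : ℕ) : ℝ) ∧
        ∀ i : Fin 4, ∃ z : ℤ, x i = (z : ℝ)} := by
  revert y
  change _ ⊆ (fun y : Fin 4 → ℝ => (l : ℝ) • y) ⁻¹' _
  apply convexHull_min
  · rintro x ⟨hx, hz⟩
    apply subset_convexHull
    refine ⟨fun i => ?_, fun i => ?_⟩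
    · have := mul_le_mul_of_nonneg_left (hx i) (Nat.cast_nonneg (α := ℝ) l)
      rw [dotProduct_smul, smul_eq_mul]
      push_cast
      linarith
    · obtain ⟨z, hz⟩ := hz i
      exact ⟨l * z, by simp [hz]⟩
  · exact (convex_convexHull ℝ _).is_linear_preimage
      ⟨fun x y => smul_add _ x y, fun a x => smul_comm _ a x⟩

theorem TinQ_convex {ι : Type} (A : ι → Fin 4 → ℤ) (c : ι → ℤ) : Convex ℝ (TinQ A c) := by
  rintro x ⟨k, hk, hx⟩ y ⟨l, hl, hy⟩ a b ha hb hab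
  refine ⟨l * k, Nat.mul_pos hl hk, ?_⟩
  have h1 := hull_scale A c k l _ hx
  have h2 := hull_scale A c l k _ hy
  rw [mul_comm k l] at h2
  have := convex_convexHull ℝ _ h1 h2 ha hb hab
  convert this using 1
  funext j
  simp only [Pi.add_apply, Pi.smul_apply, smul_eq_mul]
  push_cast
  ring

theorem TinQ_rat {ι : Type} (A : ι → Fin 4 → ℤ) (c : ι → ℤ) (q : Fin 4 → ℚ)
    (hq : (fun j => (q j : ℝ)) ∈ PolyQ A c 1) : (fun j => (q j : ℝ)) ∈ TinQ A c := by
  refine ⟨∏ j, (q j).den, Finset.prod_pos fun j _ => (q j).den_pos, ?_⟩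
  apply subset_convexHull
  refine ⟨fun i => ?_, fun i => ?_⟩
  · have := mul_le_mul_of_nonneg_left (hq i)
      (Nat.cast_nonneg (α := ℝ) (∏ j, (q j).den))
    rw [dotProduct_smul, smul_eq_mul]
    linarith
  · refine ⟨(∏ j ∈ Finset.univ.erase i, (q j).den : ℕ) * (q i).num, ?_⟩
    rw [← Finset.prod_erase_mul _ _ (Finset.mem_univ i)]
    have h : ((q i).den : ℝ) * (q i : ℝ) = (q i).num := by
      exact_mod_cast Rat.den_mul_eq_num (q i)
    simp only [Pi.smul_apply, smul_eq_mul]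
    push_cast
    rw [mul_assoc, h]

theorem TinQ_eq {ι : Type} [Fintype ι] (A : ι → Fin 4 → ℤ) (c : ι → ℤ)
    (hb : ∀ v : Fin 4 → ℝ, v ≠ 0 → ∃ i, 0 < (fun j => (A i j : ℝ)) ⬝ᵥ v) :
    TinQ A c = PolyQ A c 1 := by
  apply Set.Subset.antisymm
  · rintro d ⟨k, hk, hd⟩
    have h := convexHull_min (fun x hx => hx.1) (polyQ_convex A c k) hd
    intro i
    have h1 := h i
    rw [dotProduct_smul, smul_eq_mul] at h1
    rw [one_mul]
    exact le_of_mul_le_mul_left h1 (by exact_mod_cast hk)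
  · intro d hd
    exact polyQ_subset A c hb _ (TinQ_convex A c) (TinQ_rat A c) _ d hd rfl

/-- Constraint matrix. -/
def matA : Fin 12 → Fin 4 → ℤ :=
  ![![-1, 0, 0, 0], ![0, -1, 0, 0], ![0, 0, -1, 0], ![0, 0, 0, -1],
    ![1, 1, 1, 0], ![1, 1, 0, 1], ![1, 0, 1, 1], ![0, 1, 1, 1],
    ![1, 1, 0, 0], ![0, 0, 1, 1], ![1, 0, 1, 0], ![0, 1, 0, 1]]

/-- Right-hand sides. -/
def vecC (M1 M2 N1 N2 : ℕ) : Fin 12 → ℤ :=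
  ![0, 0, 0, 0, max N1 M1, max N1 M2, max N2 M1, max N2 M2, N1, N2, M1, M2]

theorem Dout_eq (M1 M2 N1 N2 κ : ℕ) :
    Dout ((κ * M1 : ℕ) : ℝ) ((κ * M2 : ℕ) : ℝ) ((κ * N1 : ℕ) : ℝ) ((κ * N2 : ℕ) : ℝ) =
      PolyQ matA (vecC M1 M2 N1 N2) κ := by
  have hk : (0 : ℝ) ≤ κ := Nat.cast_nonneg κ
  ext d
  simp [Dout, PolyQ, matA, vecC, Fin.forall_fin_succ, dotProduct, Fin.sum_univ_succ,
    ← mul_max_of_nonneg _ _ hk, add_assoc]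

theorem matA_bdd (v : Fin 4 → ℝ) (hv : v ≠ 0) :
    ∃ i, 0 < (fun j => (matA i j : ℝ)) ⬝ᵥ v := by
  by_contra! h
  apply hv
  simp [matA, Fin.forall_fin_succ, dotProduct, Fin.sum_univ_succ] at h
  funext j
  fin_cases j <;> simp <;> linarith

theorem stmt_11 (M1 M2 N1 N2 : ℕ) (hM1 : 0 < M1) (hM2 : 0 < M2)
    (hN1 : 0 < N1) (hN2 : 0 < N2) :
    {d : Fin 4 → ℝ | ∃ κ : ℕ, 0 < κ ∧
      (κ : ℝ) • d ∈ convexHull ℝ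
        {x : Fin 4 → ℝ |
          x ∈ Dout ((κ * M1 : ℕ) : ℝ) ((κ * M2 : ℕ) : ℝ)
              ((κ * N1 : ℕ) : ℝ) ((κ * N2 : ℕ) : ℝ) ∧
          ∀ i : Fin 4, ∃ z : ℤ, x i = (z : ℝ)}} =
    Dout (M1 : ℝ) (M2 : ℝ) (N1 : ℝ) (N2 : ℝ) := by
  have h := TinQ_eq matA (vecC M1 M2 N1 N2) matA_bdd
  have h1 := Dout_eq M1 M2 N1 N2 1
  simp only [one_mul, Nat.cast_one] at h1
  rw [h1, ← h]
  simp only [Dout_eq]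
  rfl
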